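/- arXiv:2109.02835 — 2 statements merged into one kernel-verified Lean document; each statement's English description precedes it below -/
import Mathlib

section
/- For every nonnegative integer k: the group W is finite, and in the group algebra ℤ[ℤ^6] one has 𝒜(Z^ϱ) · WGF(L6'(k);Z) = 𝒜(Z^{kω_{1'} + ϱ}). (By the Weyl character formula, this says that the weight generating function of L6'(k) equals the character char_{E6}(kω_{1'}) of the irreducible highest-weight-kω_{1'} representation of the type E6 simple Lie algebra.) -/
noncomputable section

namespace CL

variable {N : Type} [DecidableEq N] [Fintype N]

/-- One-step relation generating the partial order on the poset of positions. -/
def step (adj : N → N → Prop) (pos : Finset (N × ℕ)) (x y : N × ℕ) : Prop :=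
  x ∈ pos ∧ y ∈ pos ∧ adj x.1 y.1 ∧ y.2 = x.2 + 1

/-- The partial order on positions, generated by `step`. -/
def ple (adj : N → N → Prop) (pos : Finset (N × ℕ)) : N × ℕ → N × ℕ → Prop :=
  Relation.ReflTransGen (step adj pos)

/-- The lattice of `ℕ`-labellings of the positions which are bounded by `k`, order-reversing,
and satisfy a further constraint `extra`. -/
def Elt (adj : N → N → Prop) (pos : Finset (N × ℕ)) (k : ℕ)
    (extra : ({x : N × ℕ // x ∈ pos} → ℕ) → Prop) : Type :=
  {c : {x : N × ℕ // x ∈ pos} → ℕ //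
    (∀ x, c x ≤ k) ∧ (∀ x y, ple adj pos y.1 x.1 → c x ≤ c y) ∧ extra c}

variable {adj : N → N → Prop} {pos : Finset (N × ℕ)} {k : ℕ}
  {extra : ({x : N × ℕ // x ∈ pos} → ℕ) → Prop}

instance : Finite (Elt adj pos k extra) := by
  apply Finite.of_injective
    (fun c : Elt adj pos k extra =>
      fun x => (⟨c.1 x, Nat.lt_succ_of_le (c.2.1 x)⟩ : Fin (k + 1)))
  intro c d h
  apply Subtype.ext
  funext x
  exact congrArg Fin.val (congrFun h x)

instance : Fintype (Elt adj pos k extra) := Fintype.ofFinite _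

instance : DecidableEq (Elt adj pos k extra) := by unfold Elt; infer_instance

/-- Componentwise comparison of labellings. -/
def elLe (r s : Elt adj pos k extra) : Prop := ∀ x, r.1 x ≤ s.1 x

/-- The covering edge of color `i`: exactly one entry, at a position of color `i`,
is increased by one. -/
def edge (i : N) (r s : Elt adj pos k extra) : Prop :=
  ∃ x : {x : N × ℕ // x ∈ pos}, x.1.1 = i ∧ s.1 x = r.1 x + 1 ∧
    ∀ y, y ≠ x → s.1 y = r.1 y

instance (i : N) (r s : Elt adj pos k extra) : Decidable (edge i r s) := by
  unfold edge; infer_instance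

/-- The rank function: the sum of all entries. -/
def rk (t : Elt adj pos k extra) : ℕ := ∑ x ∈ pos.attach, t.1 x

/-- The connected component of `t` in the graph of color-`i` covering edges. -/
def comp (i : N) (t : Elt adj pos k extra) : Set (Elt adj pos k extra) :=
  {s | Relation.ReflTransGen (fun a b => edge i a b ∨ edge i b a) t s}

/-- The integer `m_i(t) = (ρ(t) − min ρ on comp_i(t)) − (max ρ on comp_i(t) − ρ(t))`. -/
def mwt (i : N) (t : Elt adj pos k extra) : ℤ :=
  ((rk t : ℤ) - ((sInf (rk '' comp i t) : ℕ) : ℤ)) -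
    (((sSup (rk '' comp i t) : ℕ) : ℤ) - (rk t : ℤ))

end CL

namespace CL

variable {N : Type} [DecidableEq N] [Fintype N]

/-- The matrix of the simple reflection `S_i : μ ↦ μ − μ_i·(row i of A)`, acting via `mulVec`. -/
def refl (A : N → N → ℤ) (i : N) : Matrix N N ℤ :=
  fun j l => (if j = l then 1 else 0) - (if l = i then A i j else 0)

/-- The Weyl group: the group of integer matrices generated by the simple reflections
(each `S_i` is an involution, so the generated submonoid is a group). -/
def weyl (A : N → N → ℤ) : Submonoid (Matrix N N ℤ) :=
  Submonoid.closure (Set.range (refl A))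

/-- The alternant `𝒜(Z^ν) = Σ_{w∈W} det(w)·Z^{w(ν)}` in the group algebra `ℤ[ℤ^N]`. -/
def alt (A : N → N → ℤ) (ν : N → ℤ) : AddMonoidAlgebra ℤ (N → ℤ) :=
  ∑ᶠ w ∈ (weyl A : Set (Matrix N N ℤ)),
    AddMonoidAlgebra.single (Matrix.mulVec w ν) (Matrix.det w)

end CL

namespace CL

variable {N : Type} [DecidableEq N] [Fintype N]

/-- The weight generating function `WGF(L;Z) = Σ_{t∈L} Z^{wt(t)}` in `ℤ[ℤ^N]`. -/
def wgf (adj : N → N → Prop) (pos : Finset (N × ℕ)) (k : ℕ)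
    (extra : ({x : N × ℕ // x ∈ pos} → ℕ) → Prop) : AddMonoidAlgebra ℤ (N → ℤ) :=
  ∑ t : Elt adj pos k extra, AddMonoidAlgebra.single (fun i => mwt i t) 1

end CL

/-! ### Type `E₆` data -/

/-- The nodes `1', 2', 3', 4', 5', 6'` of the `E₆` Dynkin diagram. -/
inductive N6 : Type
  | m1 | m2 | m3 | m4 | m5 | m6
  deriving DecidableEq

instance : Fintype N6 where
  elems := Finset.mk ↑[N6.m1, N6.m2, N6.m3, N6.m4, N6.m5, N6.m6] (by decide)
  complete := by intro x; cases x <;> decide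

open N6

/-- Adjacency in the `E₆` Dynkin diagram: edges `1'-2', 2'-3', 3'-4', 3'-5', 5'-6'`. -/
abbrev adj6 : N6 → N6 → Prop := fun a b =>
  (a, b) ∈ ([(m1, m2), (m2, m3), (m3, m4), (m3, m5), (m5, m6)] : List (N6 × N6)) ∨
  (b, a) ∈ ([(m1, m2), (m2, m3), (m3, m4), (m3, m5), (m5, m6)] : List (N6 × N6))

/-- The Cartan matrix of type `E₆`, indexed by the nodes. -/
def A6 : N6 → N6 → ℤ := fun i j => if i = j then 2 else if adj6 i j then -1 else 0

/-- The 24 (color, rank) positions of the poset `P24 = 𝒫`. -/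
def pos24 : Finset (N6 × ℕ) :=
  {(m1, 0), (m2, 1), (m3, 2), (m4, 3), (m5, 3), (m3, 4), (m6, 4), (m2, 5), (m5, 5),
   (m1, 6), (m3, 6), (m2, 7), (m4, 7), (m1, 8), (m3, 8), (m2, 9), (m5, 9), (m3, 10),
   (m6, 10), (m4, 11), (m5, 11), (m3, 12), (m2, 13), (m1, 14)}

/-- The 16 (color, rank) positions of the minuscule poset `P16' = P_{E₆}(ω₁')`. -/
def pos16p : Finset (N6 × ℕ) :=
  {(m6, 0), (m5, 1), (m3, 2), (m2, 3), (m4, 3), (m1, 4), (m3, 4), (m2, 5), (m5, 5),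
   (m3, 6), (m6, 6), (m4, 7), (m5, 7), (m3, 8), (m2, 9), (m1, 10)}

/-- The 16 (color, rank) positions of the minuscule poset `P16'' = P_{E₆}(ω₆')`. -/
def pos16pp : Finset (N6 × ℕ) :=
  {(m1, 0), (m2, 1), (m3, 2), (m4, 3), (m5, 3), (m3, 4), (m6, 4), (m2, 5), (m5, 5),
   (m1, 6), (m3, 6), (m2, 7), (m4, 7), (m3, 8), (m5, 9), (m6, 10)}

/-- The extra constraints on elements of `L6(a,b)`: `c((1',8)) ≤ a` and `c((1',6)) ≥ a`. -/
def extra6 (a : ℕ) : ({x : N6 × ℕ // x ∈ pos24} → ℕ) → Prop := fun c =>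
  c ⟨(m1, 8), by decide⟩ ≤ a ∧ a ≤ c ⟨(m1, 6), by decide⟩

/-- The lattice `L6(a,b) = L_{E₆}(aω₁' + bω₆')`. -/
abbrev L6ab (a b : ℕ) : Type := CL.Elt adj6 pos24 (a + b) (extra6 a)

/-- The lattice `L6'(k) = L_{E₆}(kω₁')`. -/
abbrev L6p (k : ℕ) : Type := CL.Elt adj6 pos16p k (fun _ => True)

/-- The lattice `L6''(k) = L_{E₆}(kω₆')`. -/
abbrev L6pp (k : ℕ) : Type := CL.Elt adj6 pos16pp k (fun _ => True)


/-! ### A concrete model with positions indexed by `Fin 16` -/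

namespace E6P

open CL

/-- The positions, listed along a linear extension. -/
def posf : Fin 16 → N6 × ℕ :=
  ![(m6, 0), (m5, 1), (m3, 2), (m2, 3), (m4, 3), (m1, 4), (m3, 4), (m2, 5), (m5, 5),
   (m3, 6), (m6, 6), (m4, 7), (m5, 7), (m3, 8), (m2, 9), (m1, 10)]

/-- Colors of positions. -/
def col (x : Fin 16) : N6 := (posf x).1

/-- Upper covers. -/
def up : Fin 16 → List (Fin 16) :=
  ![[1], [2], [3, 4], [5, 6], [6], [7], [7, 8], [9], [9, 10], [11, 12], [12], [13], [13],
    [14], [15], []]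

/-- Lower covers. -/
def dn : Fin 16 → List (Fin 16) :=
  ![[], [0], [1], [2], [2], [3], [3, 4], [5, 6], [6], [7, 8], [8], [9], [9, 10], [11, 12],
    [13], [14]]

theorem posf_mem (x : Fin 16) : posf x ∈ pos16p := by
  revert x; decide

/-- The bijection between indices and positions. -/
def e : Fin 16 ≃ {x : N6 × ℕ // x ∈ pos16p} :=
  Equiv.ofBijective (fun x => ⟨posf x, posf_mem x⟩) (by
    constructor
    · intro a b h
      have h' : posf a = posf b := congrArg Subtype.val h
      revert a b; decide
    · rintro ⟨y, hy⟩
      have : ∀ y ∈ pos16p, ∃ x, posf x = y := by decide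
      obtain ⟨x, hx⟩ := this y hy
      exact ⟨x, Subtype.ext hx⟩)

theorem e_val (x : Fin 16) : (e x).1 = posf x := rfl

theorem up_iff : ∀ x y : Fin 16, y ∈ up x ↔
    (adj6 (posf x).1 (posf y).1 ∧ (posf y).2 = (posf x).2 + 1) := by decide

theorem dn_iff : ∀ x y : Fin 16, y ∈ dn x ↔ x ∈ up y := by decide

theorem col_up : ∀ x y : Fin 16, y ∈ up x → col x ≠ col y := by decide

theorem dn_lt : ∀ x y : Fin 16, y ∈ dn x → y < x := by decide

theorem up_between : ∀ x y : Fin 16, col x = col y → x < y → ∃ z ∈ up x, z < y := by decide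

theorem step_up (x y : Fin 16) : step adj6 pos16p (posf x) (posf y) ↔ y ∈ up x := by
  rw [up_iff]
  exact ⟨fun h => h.2.2, fun h => ⟨posf_mem _, posf_mem _, h⟩⟩

variable {k : ℕ}

/-- Values of a labelling. -/
def v (t : L6p k) (x : Fin 16) : ℕ := t.1 (e x)

theorem v_inj {s t : L6p k} (h : ∀ x, v s x = v t x) : s = t := by
  apply Subtype.ext
  funext y
  obtain ⟨x, rfl⟩ := e.surjective y
  exact h x

theorem v_le (t : L6p k) (x : Fin 16) : v t x ≤ k := t.2.1 _

theorem v_up (t : L6p k) {x y : Fin 16} (h : y ∈ up x) : v t y ≤ v t x :=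
  t.2.2.1 _ _ (Relation.ReflTransGen.single ((step_up x y).2 h))

/-- Building labellings. -/
def mk (f : Fin 16 → ℕ) (hk : ∀ x, f x ≤ k) (hu : ∀ x, ∀ y ∈ up x, f y ≤ f x) : L6p k :=
  ⟨fun p => f (e.symm p), fun _ => hk _, by
    have key : ∀ a b : N6 × ℕ, ple adj6 pos16p a b → ∀ x y, posf x = a → posf y = b →
        f y ≤ f x := by
      intro a b h
      induction h with
      | refl =>
        intro x y hx hy
        have : e x = e y := Subtype.ext (hx.trans hy.symm)
        rw [e.injective this]
      | tail _ hbc ih =>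
        intro x y hx hy
        obtain ⟨z, hz⟩ := e.surjective ⟨_, hbc.1⟩
        have hz' : posf z = _ := congrArg Subtype.val hz
        refine le_trans ?_ (ih x z hx hz')
        apply hu
        rw [← step_up, hz', hy]
        exact hbc
    intro x y h
    refine key _ _ h (e.symm y) (e.symm x) ?_ ?_
    · rw [← e_val, Equiv.apply_symm_apply]
    · rw [← e_val, Equiv.apply_symm_apply], trivial⟩

@[simp] theorem v_mk (f : Fin 16 → ℕ) (hk : ∀ x, f x ≤ k) (hu : ∀ x, ∀ y ∈ up x, f y ≤ f x)
    (x : Fin 16) : v (mk f hk hu) x = f x := by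
  simp [v, mk]

theorem rk_eq (t : L6p k) : rk t = ∑ x, v t x := by
  unfold rk v
  rw [Equiv.sum_comp e (fun y => t.1 y)]
  rfl

theorem edge_iff (i : N6) (r s : L6p k) : edge i r s ↔
    ∃ x, col x = i ∧ v s x = v r x + 1 ∧ ∀ y, y ≠ x → v s y = v r y := by
  constructor
  · rintro ⟨p, h1, h2, h3⟩
    obtain ⟨x, rfl⟩ := e.surjective p
    exact ⟨x, h1, h2, fun y hy => h3 _ (fun h => hy (e.injective h))⟩
  · rintro ⟨x, h1, h2, h3⟩
    refine ⟨e x, h1, h2, fun y hy => ?_⟩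
    obtain ⟨z, rfl⟩ := e.surjective y
    exact h3 z (fun h => hy (by rw [h]))

/-- Agreement off color `i`. -/
def agree (i : N6) (s t : L6p k) : Prop := ∀ x, col x ≠ i → v s x = v t x

theorem comp_agree {i : N6} {s t : L6p k} (h : s ∈ comp i t) : agree i s t := by
  change Relation.ReflTransGen _ t s at h
  induction h with
  | refl => intro x _; rfl
  | tail _ hbc ih =>
    intro x hx
    rw [← ih x hx]
    rcases hbc with h | h
    · obtain ⟨p, h1, _, h3⟩ := (edge_iff _ _ _).1 h
      exact h3 x (fun h => hx (by rw [h, h1]))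
    · obtain ⟨p, h1, _, h3⟩ := (edge_iff _ _ _).1 h
      exact (h3 x (fun h => hx (by rw [h, h1]))).symm

theorem reach_up (i : N6) (s : L6p k) : ∀ (n : ℕ) (t : L6p k), (∑ x, (v s x - v t x) = n) →
    agree i s t → (∀ x, v t x ≤ v s x) →
    Relation.ReflTransGen (fun a b : L6p k => edge i a b) t s := by
  intro n
  induction n with
  | zero =>
    intro t hn _ hle
    have : t = s := by
      apply v_inj
      intro x
      have := (Finset.sum_eq_zero_iff.1 hn) x (Finset.mem_univ _)
      have := hle x
      omega
    rw [this]
  | succ n ih =>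
    intro t hn hag hle
    obtain ⟨x, hx⟩ : ∃ x, v t x < v s x := by
      by_contra hcon
      push Not at hcon
      have : ∑ x, (v s x - v t x) = 0 :=
        Finset.sum_eq_zero (fun x _ => by have := hcon x; omega)
      omega
    have hc : col x = i := by
      by_contra hcon
      have := hag x hcon
      omega
    let t' : L6p k := mk (fun y => if y = x then v t y + 1 else v t y)
      (by
        intro y
        have h1 := v_le t y
        have h2 := v_le s x
        split_ifs with h
        · subst h; omega
        · exact h1)
      (by
        intro y z hz
        have h1 := v_up t hz
        have h2 := v_up s hz
        have h3 := col_up _ _ hz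
        split_ifs with ha hb hb
        · omega
        · subst ha
          have := hag y (fun h => h3 (h.trans hc.symm))
          omega
        · omega
        · omega)
    have hv : ∀ y, v t' y = if y = x then v t y + 1 else v t y := fun y => v_mk _ _ _ y
    refine Relation.ReflTransGen.head (b := t') ?_ (ih t' ?_ ?_ ?_)
    · rw [edge_iff]
      exact ⟨x, hc, by simp [hv], fun y hy => by simp [hv, hy]⟩
    · have e1 : ∑ y, (v s y - v t y) = ∑ y, ((v s y - v t' y) + if y = x then 1 else 0) := by
        apply Finset.sum_congr rfl
        intro y _
        rw [hv]
        split_ifs with h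
        · subst h; omega
        · omega
      rw [Finset.sum_add_distrib] at e1
      simp at e1
      omega
    · intro y hy
      rw [hv, if_neg (fun h => hy (by rw [h, hc]))]
      exact hag y hy
    · intro y
      rw [hv]
      have := hle y
      split_ifs with h
      · subst h; omega
      · exact this

theorem mem_comp_up {i : N6} {s t : L6p k} (h : agree i s t) (hle : ∀ x, v t x ≤ v s x) :
    s ∈ comp i t :=
  Relation.ReflTransGen.mono (fun _ _ h => Or.inl h) _ _ (reach_up i s _ t rfl h hle)

theorem mem_comp_dn {i : N6} {s t : L6p k} (h : agree i s t) (hle : ∀ x, v s x ≤ v t x) :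
    s ∈ comp i t := by
  have := reach_up i t _ s rfl (fun x hx => (h x hx).symm) hle
  exact Relation.ReflTransGen.mono (fun _ _ h => Or.inr h) _ _ (Relation.ReflTransGen.swap _ _ this)

theorem mwt_eq {i : N6} {t a b : L6p k} (ha : agree i a t) (hb : agree i b t)
    (h : ∀ s, agree i s t → ∀ x, v a x ≤ v s x ∧ v s x ≤ v b x) :
    mwt i t = 2 * (rk t : ℤ) - rk a - rk b := by
  have h1 : sInf (rk '' comp i t) = rk a := by
    apply IsLeast.csInf_eq
    refine ⟨⟨a, mem_comp_dn ha (fun x => (h t (fun _ _ => rfl) x).1), rfl⟩, ?_⟩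
    rintro _ ⟨s, hs, rfl⟩
    rw [rk_eq, rk_eq]
    exact Finset.sum_le_sum (fun x _ => (h s (comp_agree hs) x).1)
  have h2 : sSup (rk '' comp i t) = rk b := by
    apply IsGreatest.csSup_eq
    refine ⟨⟨b, mem_comp_up hb (fun x => (h t (fun _ _ => rfl) x).2), rfl⟩, ?_⟩
    rintro _ ⟨s, hs, rfl⟩
    rw [rk_eq, rk_eq]
    exact Finset.sum_le_sum (fun x _ => (h s (comp_agree hs) x).2)
  unfold mwt
  rw [h1, h2]
  ring

/-- Lower bound for the value at `x` given the neighbors. -/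
def lo (t : L6p k) (x : Fin 16) : ℕ := (up x).foldr (fun y a => max (v t y) a) 0

/-- Upper bound for the value at `x` given the neighbors. -/
def hi (t : L6p k) (x : Fin 16) : ℕ := (dn x).foldr (fun y a => min (v t y) a) k

theorem foldr_max_le (f : Fin 16 → ℕ) (b : ℕ) (l : List (Fin 16)) :
    l.foldr (fun y a => max (f y) a) 0 ≤ b ↔ ∀ y ∈ l, f y ≤ b := by
  induction l with
  | nil => simp
  | cons a l ih => simp [ih]

theorem le_foldr_min (f : Fin 16 → ℕ) (b : ℕ) (l : List (Fin 16)) :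
    b ≤ l.foldr (fun y a => min (f y) a) k ↔ b ≤ k ∧ ∀ y ∈ l, b ≤ f y := by
  induction l with
  | nil => simp
  | cons a l ih => simp [ih]; tauto

theorem lo_le_iff (t : L6p k) (x : Fin 16) (b : ℕ) : lo t x ≤ b ↔ ∀ y ∈ up x, v t y ≤ b :=
  foldr_max_le _ _ _

theorem le_hi_iff (t : L6p k) (x : Fin 16) (b : ℕ) :
    b ≤ hi t x ↔ b ≤ k ∧ ∀ y ∈ dn x, b ≤ v t y :=
  le_foldr_min _ _ _

theorem lo_le (t : L6p k) (x : Fin 16) : lo t x ≤ v t x :=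
  (lo_le_iff _ _ _).2 (fun _ hy => v_up t hy)

theorem le_hi (t : L6p k) (x : Fin 16) : v t x ≤ hi t x :=
  (le_hi_iff _ _ _).2 ⟨v_le t x, fun _ hy => v_up t ((dn_iff _ _).1 hy)⟩

theorem hi_le (t : L6p k) (x : Fin 16) : hi t x ≤ k := ((le_hi_iff t x _).1 le_rfl).1

theorem lo_agree {i : N6} {s t : L6p k} (h : agree i s t) {x : Fin 16} (hx : col x = i) :
    lo s x = lo t x := by
  have : ∀ y ∈ up x, v s y = v t y :=
    fun y hy => h y (fun hc => col_up _ _ hy (hx.trans hc.symm))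
  apply le_antisymm
  · rw [lo_le_iff]
    intro y hy
    rw [this y hy]
    exact (lo_le_iff t x _).1 le_rfl y hy
  · rw [lo_le_iff]
    intro y hy
    rw [← this y hy]
    exact (lo_le_iff s x _).1 le_rfl y hy

theorem hi_agree {i : N6} {s t : L6p k} (h : agree i s t) {x : Fin 16} (hx : col x = i) :
    hi s x = hi t x := by
  have : ∀ y ∈ dn x, v s y = v t y :=
    fun y hy => h y (fun hc => col_up _ _ ((dn_iff _ _).1 hy) (hc.trans hx.symm))
  apply le_antisymm
  · rw [le_hi_iff]
    refine ⟨hi_le _ _, fun y hy => ?_⟩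
    rw [← this y hy]
    exact ((le_hi_iff s x _).1 le_rfl).2 y hy
  · rw [le_hi_iff]
    refine ⟨hi_le _ _, fun y hy => ?_⟩
    rw [this y hy]
    exact ((le_hi_iff t x _).1 le_rfl).2 y hy

/-- Change the values on color `i`. -/
def upd (t : L6p k) (i : N6) (g : Fin 16 → ℕ)
    (h : ∀ x, col x = i → lo t x ≤ g x ∧ g x ≤ hi t x) : L6p k :=
  mk (fun x => if col x = i then g x else v t x)
    (by
      intro x
      split_ifs with hx
      · exact (h x hx).2.trans (hi_le _ _)
      · exact v_le _ _)
    (by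
      intro x y hy
      have hc := col_up _ _ hy
      split_ifs with h1 h2 h2
      · exact absurd (h2.trans h1.symm) hc
      · exact ((le_hi_iff t y _).1 (h y h1).2).2 x ((dn_iff _ _).2 hy)
      · exact ((lo_le_iff t x _).1 (h x h2).1) y hy
      · exact v_up t hy)

theorem v_upd (t : L6p k) (i : N6) (g : Fin 16 → ℕ)
    (h : ∀ x, col x = i → lo t x ≤ g x ∧ g x ≤ hi t x) (x : Fin 16) :
    v (upd t i g h) x = if col x = i then g x else v t x := v_mk _ _ _ _

theorem agree_upd (t : L6p k) (i : N6) (g : Fin 16 → ℕ)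
    (h : ∀ x, col x = i → lo t x ≤ g x ∧ g x ≤ hi t x) : agree i (upd t i g h) t := by
  intro x hx
  rw [v_upd, if_neg hx]

theorem mwt_sum (i : N6) (t : L6p k) :
    mwt i t = ∑ x, if col x = i then 2 * (v t x : ℤ) - lo t x - hi t x else 0 := by
  have hlh : ∀ x, lo t x ≤ hi t x := fun x => (lo_le t x).trans (le_hi t x)
  rw [mwt_eq (a := upd t i (lo t) (fun x _ => ⟨le_rfl, hlh x⟩))
    (b := upd t i (hi t) (fun x _ => ⟨hlh x, le_rfl⟩)) (agree_upd _ _ _ _) (agree_upd _ _ _ _)]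
  · rw [rk_eq, rk_eq, rk_eq]
    push_cast
    rw [Finset.mul_sum, ← Finset.sum_sub_distrib, ← Finset.sum_sub_distrib]
    apply Finset.sum_congr rfl
    intro x _
    rw [v_upd, v_upd]
    split_ifs <;> ring
  · intro s hs x
    rw [v_upd, v_upd]
    split_ifs with hx
    · rw [← lo_agree hs hx, ← hi_agree hs hx]
      exact ⟨lo_le _ _, le_hi _ _⟩
    · rw [hs x hx]
      exact ⟨le_rfl, le_rfl⟩

theorem mwt_lin (i : N6) (t : L6p k) :
    mwt i t = (∑ x, A6 i (col x) * (v t x : ℤ)) - (if i = m6 then (k : ℤ) else 0) := by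
  rw [mwt_sum]
  have hk := v_le t
  have hu := fun x y (h : y ∈ up x) => v_up t h
  have h0 := hk 0
  have h1 := hu 0 1 (by decide)
  have h2 := hu 1 2 (by decide)
  have h3 := hu 2 3 (by decide)
  have h4 := hu 2 4 (by decide)
  have h5 := hu 3 5 (by decide)
  have h6 := hu 3 6 (by decide)
  have h7 := hu 4 6 (by decide)
  have h8 := hu 5 7 (by decide)
  have h9 := hu 6 7 (by decide)
  have h10 := hu 6 8 (by decide)
  have h11 := hu 7 9 (by decide)
  have h12 := hu 8 9 (by decide)
  have h13 := hu 8 10 (by decide)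
  have h14 := hu 9 11 (by decide)
  have h15 := hu 9 12 (by decide)
  have h16 := hu 10 12 (by decide)
  have h17 := hu 11 13 (by decide)
  have h18 := hu 12 13 (by decide)
  have h19 := hu 13 14 (by decide)
  have h20 := hu 14 15 (by decide)
  clear hk hu
  unfold lo hi
  generalize v t = f at *
  cases i <;>
  · simp [Fin.sum_univ_succ, col, posf, A6, up, dn, adj6, Fin.succ]
    try omega

theorem A6_symm : ∀ i j : N6, A6 i j = A6 j i := by decide

theorem A6_diag : ∀ i : N6, A6 i i = 2 := by decide

/-- Reflect color `i`, with an offset `δ`. -/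
def rfl' (i : N6) (δ : Fin 16 → ℕ) (t : L6p k) (hδ : ∀ x, v t x + δ x ≤ hi t x) : L6p k :=
  upd t i (fun x => lo t x + hi t x - v t x - δ x) (fun x _ => by
    have h1 := lo_le t x
    have h2 := hδ x
    constructor <;> omega)

theorem v_rfl (i : N6) (δ : Fin 16 → ℕ) (t : L6p k) (hδ : ∀ x, v t x + δ x ≤ hi t x)
    (x : Fin 16) : v (rfl' i δ t hδ) x =
      if col x = i then lo t x + hi t x - v t x - δ x else v t x := v_upd _ _ _ _ _

theorem agree_rfl (i : N6) (δ : Fin 16 → ℕ) (t : L6p k) (hδ : ∀ x, v t x + δ x ≤ hi t x) :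
    agree i (rfl' i δ t hδ) t := agree_upd _ _ _ _

theorem rfl_rfl (i : N6) (δ : Fin 16 → ℕ) (t : L6p k) (hδ : ∀ x, v t x + δ x ≤ hi t x)
    (hδ' : ∀ x, v (rfl' i δ t hδ) x + δ x ≤ hi (rfl' i δ t hδ) x) :
    rfl' i δ (rfl' i δ t hδ) hδ' = t := by
  apply v_inj
  intro x
  rw [v_rfl]
  split_ifs with hx
  · rw [lo_agree (agree_rfl i δ t hδ) hx, hi_agree (agree_rfl i δ t hδ) hx, v_rfl, if_pos hx]
    have h1 := lo_le t x
    have h2 := hδ x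
    omega
  · rw [v_rfl, if_neg hx]

/-- The weight. -/
def wt (t : L6p k) : N6 → ℤ := fun i => mwt i t

theorem wt_rfl (i j : N6) (δ : Fin 16 → ℕ) (t : L6p k) (hδ : ∀ x, v t x + δ x ≤ hi t x) :
    wt (rfl' i δ t hδ) j =
      wt t j - (wt t i + ∑ x, if col x = i then (δ x : ℤ) else 0) * A6 i j := by
  have h1 : wt t i + (∑ x, if col x = i then (δ x : ℤ) else 0) =
      ∑ x, ((v t x : ℤ) - v (rfl' i δ t hδ) x) := by
    unfold wt
    rw [mwt_sum, ← Finset.sum_add_distrib]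
    apply Finset.sum_congr rfl
    intro x _
    rw [v_rfl]
    have h1 := lo_le t x
    have h2 := hδ x
    split_ifs
    · omega
    · omega
  rw [h1]
  unfold wt
  rw [mwt_lin, mwt_lin, Finset.sum_mul]
  have : ∀ a b c d : ℤ, a - b = -d → a - c = b - c - d := by intros; omega
  apply this
  rw [← Finset.sum_sub_distrib, ← Finset.sum_neg_distrib]
  apply Finset.sum_congr rfl
  intro x _
  by_cases hx : col x = i
  · rw [hx, A6_symm j i]; ring
  · rw [agree_rfl i δ t hδ x hx]; ring

theorem refl_mulVec (i j : N6) (μ : N6 → ℤ) :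
    Matrix.mulVec (refl A6 i) μ j = μ j - μ i * A6 i j := by
  simp [Matrix.mulVec, dotProduct, CL.refl, sub_mul, Finset.sum_sub_distrib]
  ring

/-- Plain reflection. -/
def R (i : N6) (t : L6p k) : L6p k := rfl' i (fun _ => 0) t (fun x => le_hi t x)

theorem R_R (i : N6) (t : L6p k) : R i (R i t) = t := rfl_rfl _ _ _ _ _

theorem wt_R (i : N6) (t : L6p k) : wt (R i t) = Matrix.mulVec (refl A6 i) (wt t) := by
  funext j
  rw [refl_mulVec, R, wt_rfl]
  simp

theorem sum_inv {B : Type*} [AddCommMonoid B] {w : Matrix N6 N6 ℤ} (hw : w ∈ weyl A6) :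
    ∀ G : (N6 → ℤ) → B, ∑ t : L6p k, G (Matrix.mulVec w (wt t)) = ∑ t : L6p k, G (wt t) := by
  unfold weyl at hw
  induction hw using Submonoid.closure_induction with
  | mem w hw =>
    obtain ⟨i, rfl⟩ := hw
    intro G
    have hinv : Function.Involutive (R i : L6p k → L6p k) := R_R i
    rw [← Equiv.sum_comp hinv.toPerm (fun t => G (wt t))]
    apply Finset.sum_congr rfl
    intro t _
    rw [← wt_R]
    rfl
  | one => intro G; simp
  | mul a b _ _ iha ihb =>
    intro G
    simp_rw [← Matrix.mulVec_mulVec]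
    rw [ihb (fun μ => G (Matrix.mulVec a μ)), iha]

/-- The top element. -/
def top : L6p k := mk (fun _ => k) (fun _ => le_rfl) (fun _ _ _ => le_rfl)

theorem wt_top : wt (top : L6p k) = fun j => if j = m1 then (k : ℤ) else 0 := by
  funext j
  unfold wt
  rw [mwt_lin]
  simp_rw [top, v_mk]
  cases j <;>
  · simp [Fin.sum_univ_succ, col, posf, A6, adj6, Fin.succ]
    try ring

theorem weyl_finite : ((weyl A6 : Set (Matrix N6 N6 ℤ)).Finite) := by
  let X : Set (N6 → ℤ) := Set.range (wt : L6p 1 → N6 → ℤ)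
  have hX : X.Finite := Set.finite_range _
  have hW : ∀ w ∈ weyl A6, ∀ x ∈ X, Matrix.mulVec w x ∈ X := by
    intro w hw
    unfold weyl at hw
    induction hw using Submonoid.closure_induction with
    | mem w hw =>
      obtain ⟨i, rfl⟩ := hw
      rintro _ ⟨t, rfl⟩
      exact ⟨R i t, wt_R i t⟩
    | one => intro x hx; simpa using hx
    | mul a b _ _ iha ihb =>
      intro x hx
      rw [← Matrix.mulVec_mulVec]
      exact iha _ (ihb _ hx)
  have hR : ∀ i, ∀ x ∈ X, Matrix.mulVec (refl A6 i) x ∈ X := fun i =>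
    hW _ (Submonoid.subset_closure ⟨i, rfl⟩)
  have hR' : ∀ i, ∀ x ∈ X, ∀ y : N6 → ℤ, (∀ j, y j = x j - x i * A6 i j) → y ∈ X := by
    intro i x hx y hy
    have : y = Matrix.mulVec (refl A6 i) x := by
      funext j; rw [refl_mulVec, hy]
    rw [this]; exact hR i x hx
  let E : ℤ → ℤ → ℤ → ℤ → ℤ → ℤ → N6 → ℤ := fun a b c d e f i =>
    match i with
    | m1 => a | m2 => b | m3 => c | m4 => d | m5 => e | m6 => f
  have x1 : E 1 0 0 0 0 0 ∈ X := ⟨top, by rw [wt_top]; funext j; cases j <;> rfl⟩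
  have x2 : E (-1) 1 0 0 0 0 ∈ X := hR' m1 _ x1 _ (by decide)
  have x3 : E 0 (-1) 1 0 0 0 ∈ X := hR' m2 _ x2 _ (by decide)
  have x4 : E 0 0 (-1) 1 1 0 ∈ X := hR' m3 _ x3 _ (by decide)
  have x5 : E 0 0 0 (-1) 1 0 ∈ X := hR' m4 _ x4 _ (by decide)
  have x6 : E 0 0 0 1 (-1) 1 ∈ X := hR' m5 _ x4 _ (by decide)
  have : Finite X := hX
  refine Set.Finite.of_injOn (f := fun w : Matrix N6 N6 ℤ => fun x : X => Matrix.mulVec w x.1)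
    (t := Set.pi Set.univ (fun _ => X)) ?_ ?_ (Set.Finite.pi' (fun _ => hX) |>.subset ?_)
  · intro w hw x _
    exact hW w hw x.1 x.2
  · intro w _ w' _ h
    have h' : ∀ x ∈ X, ∀ i, Matrix.mulVec w x i = Matrix.mulVec w' x i := by
      intro x hx i
      exact congrFun (congrFun h ⟨x, hx⟩) i
    have hE : ∀ (u : Matrix N6 N6 ℤ) a b c d e f i, Matrix.mulVec u (E a b c d e f) i =
        u i m1 * a + u i m2 * b + u i m3 * c + u i m4 * d + u i m5 * e + u i m6 * f := by
      intro u a b c d e f i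
      have : (Finset.univ : Finset N6) = {m1, m2, m3, m4, m5, m6} := rfl
      simp [Matrix.mulVec, dotProduct, this, E]
      ring
    ext i j
    have y1 := h' _ x1 i
    have y2 := h' _ x2 i
    have y3 := h' _ x3 i
    have y4 := h' _ x4 i
    have y5 := h' _ x5 i
    have y6 := h' _ x6 i
    rw [hE, hE] at y1 y2 y3 y4 y5 y6
    cases j <;> omega
  · intro f hf x
    exact hf x trivial

theorem refl_sq : ∀ i : N6, refl A6 i * refl A6 i = 1 := by
  intro i
  apply Matrix.ext_of_mulVec_single
  intro j
  rw [← Matrix.mulVec_mulVec, Matrix.one_mulVec]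
  funext l
  rw [refl_mulVec, refl_mulVec, refl_mulVec, A6_diag]
  ring

theorem refl_det (i : N6) : (refl A6 i).det = -1 := by
  have : refl A6 i = 1 + Matrix.replicateCol Unit (fun j => - A6 i j) *
      Matrix.replicateRow Unit (Pi.single i (1 : ℤ)) := by
    ext j l
    simp [CL.refl, Matrix.mul_apply, Matrix.one_apply, Pi.single_apply]
    split_ifs <;> ring
  rw [this, Matrix.det_one_add_replicateCol_mul_replicateRow]
  simp [A6_diag]

theorem alt_eq (ν : N6 → ℤ) : alt A6 ν =
    ∑ w ∈ weyl_finite.toFinset, AddMonoidAlgebra.single (Matrix.mulVec w ν) (Matrix.det w) := by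
  unfold alt
  rw [finsum_mem_eq_finite_toFinset_sum _ weyl_finite]

theorem alt_refl (i : N6) (ν : N6 → ℤ) :
    alt A6 (Matrix.mulVec (refl A6 i) ν) = - alt A6 ν := by
  rw [alt_eq, alt_eq, ← Finset.sum_neg_distrib]
  have hi : refl A6 i ∈ weyl A6 := Submonoid.subset_closure ⟨i, rfl⟩
  refine Finset.sum_nbij' (fun w => w * refl A6 i) (fun w => w * refl A6 i) ?_ ?_ ?_ ?_ ?_
  · intro w hw
    simp only [Set.Finite.mem_toFinset, SetLike.mem_coe] at hw ⊢
    exact mul_mem hw hi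
  · intro w hw
    simp only [Set.Finite.mem_toFinset, SetLike.mem_coe] at hw ⊢
    exact mul_mem hw hi
  · intro w _
    rw [mul_assoc, refl_sq, mul_one]
  · intro w _
    rw [mul_assoc, refl_sq, mul_one]
  · intro w _
    rw [Matrix.mulVec_mulVec, Matrix.det_mul, refl_det]
    simp

/-- `p` is the first position with value below `k`. -/
def first (t : L6p k) (p : Fin 16) : Prop := v t p < k ∧ ∀ y, y < p → v t y = k

theorem first_unique {t : L6p k} {p q : Fin 16} (hp : first t p) (hq : first t q) : p = q := by
  rcases lt_trichotomy p q with h | h | h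
  · have := hq.2 p h
    have := hp.1
    omega
  · exact h
  · have := hp.2 q h
    have := hq.1
    omega

theorem first_exists {t : L6p k} (h : t ≠ top) : ∃ p, first t p := by
  have : ∃ p, v t p < k := by
    by_contra hcon
    push Not at hcon
    apply h
    apply v_inj
    intro x
    rw [top, v_mk]
    exact le_antisymm (v_le t x) (hcon x)
  obtain ⟨p, hp, hmin⟩ := WellFounded.has_min (wellFounded_lt (α := Fin 16))
    {p | v t p < k} this
  refine ⟨p, hp, fun y hy => ?_⟩
  by_contra hne
  exact hmin y (lt_of_le_of_ne (v_le t y) hne) hy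

theorem first_hi {t : L6p k} {p : Fin 16} (h : first t p) : hi t p = k := by
  apply le_antisymm (hi_le _ _)
  rw [le_hi_iff]
  exact ⟨le_rfl, fun y hy => (h.2 y (dn_lt _ _ hy)).ge⟩

theorem first_delta {t : L6p k} {p : Fin 16} (h : first t p) (x : Fin 16) :
    v t x + (if x = p then 1 else 0) ≤ hi t x := by
  split_ifs with hx
  · subst hx
    rw [first_hi h]
    exact h.1
  · exact le_hi t x

/-- The twisted reflection at `p`. -/
def Q (t : L6p k) (p : Fin 16) (h : first t p) : L6p k :=
  rfl' (col p) (fun x => if x = p then 1 else 0) t (first_delta h)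

theorem first_Q {t : L6p k} {p : Fin 16} (h : first t p) : first (Q t p h) p := by
  constructor
  · rw [Q, v_rfl, if_pos rfl, if_pos rfl]
    have h1 := lo_le t p
    have h2 := first_hi h
    have h3 := h.1
    omega
  · intro y hy
    rw [Q, v_rfl, if_neg hy.ne]
    split_ifs with hc
    · obtain ⟨z, hz, hzp⟩ := up_between y p hc hy
      have h1 := (lo_le_iff t y _).1 le_rfl z hz
      rw [h.2 z hzp] at h1
      have h2 := h.2 y hy
      have h3 := le_hi t y
      have h4 := hi_le t y
      have h5 := lo_le t y
      omega
    · exact h.2 y hy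

theorem Q_Q {t : L6p k} {p : Fin 16} (h : first t p) : Q (Q t p h) p (first_Q h) = t :=
  rfl_rfl _ _ _ _ _

theorem wt_Q {t : L6p k} {p : Fin 16} (h : first t p) :
    (fun _ => 1) + wt (Q t p h) = Matrix.mulVec (refl A6 (col p)) ((fun _ => 1) + wt t) := by
  funext j
  rw [refl_mulVec]
  simp only [Pi.add_apply]
  rw [Q, wt_rfl]
  have : (∑ x, if col x = col p then (((if x = p then 1 else 0 : ℕ)) : ℤ) else 0) = 1 := by
    rw [Finset.sum_eq_single p]
    · simp
    · intro b _ hb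
      simp [hb]
    · simp
  rw [this]
  ring

theorem sum_alt : ∑ t : L6p k, alt A6 ((fun _ => 1) + wt t) =
    alt A6 ((fun _ => 1) + wt (top : L6p k)) := by
  rw [← Finset.add_sum_erase _ _ (Finset.mem_univ (top : L6p k))]
  suffices h : ∑ t ∈ Finset.univ.erase (top : L6p k), alt A6 ((fun _ => 1) + wt t) = 0 by
    rw [h, add_zero]
  have hne : ∀ t ∈ Finset.univ.erase (top : L6p k), ∃ p, first t p := fun t ht =>
    first_exists (Finset.ne_of_mem_erase ht)
  have hcan : ∀ (t : L6p k) (p) (h : first t p),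
      alt A6 ((fun _ => 1) + wt t) + alt A6 ((fun _ => 1) + wt (Q t p h)) = 0 := by
    intro t p h
    rw [wt_Q, alt_refl, add_neg_cancel]
  refine Finset.sum_involution (fun t ht => Q t (hne t ht).choose (hne t ht).choose_spec)
    ?_ ?_ ?_ ?_
  · intro t ht
    exact hcan _ _ _
  · intro t ht h0 heq
    have h1 := hcan t _ (hne t ht).choose_spec
    rw [heq] at h1
    apply h0
    apply AddMonoidAlgebra.coeff_injective
    have h2 := congrArg AddMonoidAlgebra.coeff h1
    rw [AddMonoidAlgebra.coeff_add] at h2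
    exact self_eq_neg.1 (eq_neg_of_add_eq_zero_left h2)
  · intro t ht
    refine Finset.mem_erase.2 ⟨?_, Finset.mem_univ _⟩
    intro heq
    have h1 := (first_Q (hne t ht).choose_spec).1
    rw [heq, top, v_mk] at h1
    exact lt_irrefl _ h1
  · intro t ht
    generalize_proofs h1 h2 h3 h4
    have key : ∀ q (hq : first (Q t h1.choose h2) q), Q (Q t h1.choose h2) q hq = t := by
      intro q hq
      have := first_unique hq (first_Q h2)
      subst this
      exact Q_Q h2
    exact key _ _

end E6P

/-- the Weyl group of `E₆` is finite and
`𝒜(Z^ϱ)·WGF(L6'(k);Z) = 𝒜(Z^{kω₁'+ϱ})` in `ℤ[ℤ^6]`. -/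
theorem statement_5 (k : ℕ) :
    ((CL.weyl A6 : Set (Matrix N6 N6 ℤ)).Finite) ∧
    CL.alt A6 (fun _ => 1) * CL.wgf adj6 pos16p k (fun _ => True) =
      CL.alt A6 (fun j => (if j = m1 then (k : ℤ) else 0) + 1) := by
  refine ⟨E6P.weyl_finite, ?_⟩
  have htop : (fun j => (if j = m1 then (k : ℤ) else 0) + 1) =
      (fun _ => 1) + E6P.wt (E6P.top : L6p k) := by
    rw [E6P.wt_top]
    funext j
    simp only [Pi.add_apply]
    ring
  rw [htop, ← E6P.sum_alt, E6P.alt_eq]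
  simp_rw [E6P.alt_eq]
  rw [Finset.sum_comm, Finset.sum_mul]
  apply Finset.sum_congr rfl
  intro w hw
  have hw' : w ∈ CL.weyl A6 := by simpa using hw
  simp_rw [Matrix.mulVec_add]
  rw [E6P.sum_inv (k := k) hw' (fun μ => AddMonoidAlgebra.single
    (Matrix.mulVec w (fun _ => 1) + μ) (Matrix.det w))]
  unfold CL.wgf
  rw [Finset.mul_sum]
  apply Finset.sum_congr rfl
  intro t _
  rw [AddMonoidAlgebra.single_mul_single, mul_one]
  rfl

end
end

section
/- Fix a nonnegative integer k and t ∈ L7(k). Let C(t) := {c ∈ L7(k) : c(x) = t(x) for every position x ∈ P7 of color 5' or 6', i.e., for x ∈ {(5',4),(5',6),(5',10),(5',12),(6',5),(6',11)}}, regarded as a poset with the induced order and with each covering relation colored as in L7(k) (all such colors lie in {1,2,3,4,5}). Let S(t) be the skew-tabular lattice with parameters n = 5, m = 9 and boundary functions β0, β1 given by β0(−8) = 0; β0(j) = t((5',12)) for −7 ≤ j ≤ −4; β0(j) = t((5',4)) for −3 ≤ j ≤ 0; β1(−2) = β1(−1) = t((5',10)); β1(0) = β1(1) = t((5',6)); β1(j)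 = k for 2 ≤ j ≤ 6. Then there is a bijection from C(t) onto S(t) that is an isomorphism of posets and carries covering relations of color i to covering relations of color i for each i ∈ {1,2,3,4,5}. -/
noncomputable section

/-! ### Type `E₇` data -/

/-- The nodes `1, 2, 3, 4, 5, 5', 6'` of the `E₇` Dynkin diagram. -/
inductive N7 : Type
  | n1 | n2 | n3 | n4 | n5 | n5p | n6p
  deriving DecidableEq

instance : Fintype N7 where
  elems := Finset.mk ([.n1, .n2, .n3, .n4, .n5, .n5p, .n6p] : List N7) (by decide)
  complete := by intro x; cases x <;> decide

open N7

/-- Adjacency in the `E₇` Dynkin diagram: edges `1-2, 2-3, 3-4, 4-5, 4-5', 5'-6'`. -/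
abbrev adj7 : N7 → N7 → Prop := fun a b =>
  (a, b) ∈ ([(n1, n2), (n2, n3), (n3, n4), (n4, n5), (n4, n5p), (n5p, n6p)] : List (N7 × N7)) ∨
  (b, a) ∈ ([(n1, n2), (n2, n3), (n3, n4), (n4, n5), (n4, n5p), (n5p, n6p)] : List (N7 × N7))

/-- The 27 (color, rank) positions of the minuscule poset `P₇ = P_{E₇}(ω₁)`. -/
def pos7 : Finset (N7 × ℕ) :=
  {(n1, 0), (n2, 1), (n3, 2), (n4, 3), (n5, 4), (n5p, 4), (n4, 5), (n6p, 5), (n3, 6),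
   (n5p, 6), (n2, 7), (n4, 7), (n1, 8), (n3, 8), (n5, 8), (n2, 9), (n4, 9), (n3, 10),
   (n5p, 10), (n4, 11), (n6p, 11), (n5, 12), (n5p, 12), (n4, 13), (n3, 14), (n2, 15), (n1, 16)}

/-- The lattice `L7(k) = L_{E₇}(kω₁)` of order-reversing labellings of `P₇` by `{0,…,k}`. -/
abbrev L7 (k : ℕ) : Type := CL.Elt adj7 pos7 k (fun _ => True)

/-- The Cartan matrix of type `E₇`, indexed by the nodes. -/
def A7 : N7 → N7 → ℤ := fun i j => if i = j then 2 else if adj7 i j then -1 else 0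

/-! ### Skew-tabular lattices -/

namespace ST

/-- Index positions of a GT parallelogram: rows `0,…,n+1`, row `i` having
columns `C_i = {i, i−1, …, i−(m−1)}`. -/
def Idx (n m : ℕ) : Type :=
  {p : ℕ × ℤ // p.1 ≤ n + 1 ∧ (p.1 : ℤ) - ((m : ℤ) - 1) ≤ p.2 ∧ p.2 ≤ (p.1 : ℤ)}

/-- The skew-tabular lattice with boundary rows `β0` (row `0`) and `β1` (row `n+1`):
arrays of nonnegative integers weakly increasing along NW-to-SE and NE-to-SW diagonals. -/
def Elt (n m : ℕ) (β0 β1 : ℤ → ℕ) : Type :=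
  {g : Idx n m → ℕ //
    (∀ p : Idx n m, p.1.1 = 0 → g p = β0 p.1.2) ∧
    (∀ p : Idx n m, p.1.1 = n + 1 → g p = β1 p.1.2) ∧
    (∀ p q : Idx n m, q.1.1 = p.1.1 + 1 → q.1.2 = p.1.2 → g q ≤ g p) ∧
    (∀ p q : Idx n m, q.1.1 = p.1.1 + 1 → q.1.2 = p.1.2 + 1 → g p ≤ g q)}

variable {n m : ℕ} {β0 β1 : ℤ → ℕ}

/-- Componentwise comparison of arrays. -/
def le (r s : Elt n m β0 β1) : Prop := ∀ p, r.1 p ≤ s.1 p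

/-- The covering edge of color `i`: exactly one entry, in row `i`, is increased by one. -/
def edge (i : ℕ) (r s : Elt n m β0 β1) : Prop :=
  ∃ p : Idx n m, p.1.1 = i ∧ s.1 p = r.1 p + 1 ∧ ∀ q, q ≠ p → s.1 q = r.1 q

/-- The entry of an array at `(i, j)` (junk value `0` outside the index set). -/
def ent (g : Elt n m β0 β1) (i : ℕ) (j : ℤ) : ℕ :=
  if h : i ≤ n + 1 ∧ (i : ℤ) - ((m : ℤ) - 1) ≤ j ∧ j ≤ (i : ℤ) then g.1 ⟨(i, j), h⟩ else 0

/-- The rank function: the sum of all entries in rows `1,…,n`. -/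
def rk (g : Elt n m β0 β1) : ℕ :=
  ∑ i ∈ Finset.range (n + 2), ∑ u ∈ Finset.range m,
    if 1 ≤ i ∧ i ≤ n then ent g i ((i : ℤ) - (u : ℤ)) else 0

/-- The connected component of `g` in the graph of color-`i` covering edges. -/
def comp (i : ℕ) (g : Elt n m β0 β1) : Set (Elt n m β0 β1) :=
  {s | Relation.ReflTransGen (fun x y => edge i x y ∨ edge i y x) g s}

/-- The integer `m_i(g) = (ρ(g) − min ρ on comp_i(g)) − (max ρ on comp_i(g) − ρ(g))`. -/
def mwt (i : ℕ) (g : Elt n m β0 β1) : ℤ :=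
  ((rk g : ℤ) - ((sInf (rk '' comp i g) : ℕ) : ℤ)) -
    (((sSup (rk '' comp i g) : ℕ) : ℤ) - (rk g : ℤ))

end ST

/-- The `J₅`-component `C(t)`: elements of `L7(k)` agreeing with `t` at all positions of
color `5'` or `6'`. -/
def Ct8 (k : ℕ) (t : L7 k) : Type :=
  {c : L7 k // ∀ x : {x : N7 × ℕ // x ∈ pos7}, x.1.1 = n5p ∨ x.1.1 = n6p → c.1 x = t.1 x}


/-! ### Proof of the isomorphism -/

namespace Prf

/-- Color of a row `1,…,5` of the array. -/
def colr : ℕ → N7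
  | 1 => n1
  | 2 => n2
  | 3 => n3
  | 4 => n4
  | _ => n5

/-- Row of a color `1,…,5`. -/
def row : N7 → ℕ
  | n1 => 1
  | n2 => 2
  | n3 => 3
  | n4 => 4
  | n5 => 5
  | _ => 0

/-- The colors fixed on the component. -/
abbrev prm (a : N7) : Prop := a = n5p ∨ a = n6p

/-- Column of the array entry associated with a position. -/
def col (x : N7 × ℕ) : ℤ := ((row x.1 : ℤ) + 1 - (x.2 : ℤ)) / 2

/-- The position whose label is put at the array entry `(i, j)`; the extra positions
`(n1, 100)` and `(n1, 101)` stand for the constants `0` and `k`. -/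
def src (i : ℕ) (j : ℤ) : N7 × ℕ :=
  if i = 0 then (if j = -8 then (n1, 100) else if j ≤ -4 then (n5p, 12) else (n5p, 4))
  else if i = 6 then (if j ≤ -1 then (n5p, 10) else if j ≤ 1 then (n5p, 6) else (n1, 101))
  else if (colr i, ((i : ℤ) + 1 - 2 * j).toNat) ∈ pos7 then
    (colr i, ((i : ℤ) + 1 - 2 * j).toNat)
  else if 2 ≤ j then (n1, 101)
  else if i = 5 then (if j = 0 then (n5p, 6) else (n5p, 10))
  else if -3 < j then (n5p, 4) else (n5p, 12)

/-- Extension of a labelling by the constants. -/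
def F {k : ℕ} (c : L7 k) (x : N7 × ℕ) : ℕ :=
  if h : x ∈ pos7 then c.1 ⟨x, h⟩ else if x.2 = 100 then 0 else k

/-- Bounded search for a chain from `x` to `y`. -/
def reach : ℕ → N7 × ℕ → N7 × ℕ → Bool
  | 0, x, y => decide (x = y)
  | n + 1, x, y => decide (x = y) || ([n1, n2, n3, n4, n5, n5p, n6p].any fun a =>
      decide (adj7 x.1 a) && (decide ((a, x.2 + 1) ∈ pos7) && reach n (a, x.2 + 1) y))

theorem reach_ple (n : ℕ) : ∀ x y, x ∈ pos7 → reach n x y = true → CL.ple adj7 pos7 x y := by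
  induction n with
  | zero =>
    intro x y _ h
    simp only [reach, decide_eq_true_eq] at h
    subst h; exact Relation.ReflTransGen.refl
  | succ n ih =>
    intro x y hx h
    rw [reach, Bool.or_eq_true, decide_eq_true_eq, List.any_eq_true] at h
    rcases h with h | ⟨a, -, h⟩
    · subst h; exact Relation.ReflTransGen.refl
    · rw [Bool.and_eq_true, Bool.and_eq_true, decide_eq_true_eq, decide_eq_true_eq] at h
      exact Relation.ReflTransGen.head ⟨hx, h.2.1, h.1, rfl⟩ (ih _ _ h.2.1 h.2.2)

/-- A decidable sufficient condition for `F c y ≤ F c x`. -/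
abbrev dom (x y : N7 × ℕ) : Prop :=
  y = (n1, 100) ∨ x = (n1, 101) ∨ (x ∈ pos7 ∧ y ∈ pos7 ∧ reach 5 x y = true)

theorem F_le {k : ℕ} (c : L7 k) (x : N7 × ℕ) : F c x ≤ k := by
  unfold F
  split_ifs
  · exact c.2.1 _
  · omega
  · exact le_rfl

theorem F_dom {k : ℕ} (c : L7 k) {x y : N7 × ℕ} (h : dom x y) : F c y ≤ F c x := by
  rcases h with h | h | ⟨hx, hy, h⟩
  · subst h
    have : F c (n1, 100) = 0 := by
      unfold F
      rw [dif_neg (by decide), if_pos rfl]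
    omega
  · subst h
    have : F c (n1, 101) = k := by
      unfold F
      rw [dif_neg (by decide), if_neg (by decide)]
    rw [this]; exact F_le c y
  · unfold F
    rw [dif_pos hx, dif_pos hy]
    exact c.2.2.1 _ _ (reach_ple _ _ _ hx h)

theorem src_dom1 : ∀ i ∈ Finset.range 6, ∀ u ∈ Finset.range 8,
    dom (src i ((i : ℤ) - (u : ℤ))) (src (i + 1) ((i : ℤ) - (u : ℤ))) := by
  decide +kernel

theorem src_dom2 : ∀ i ∈ Finset.range 6, ∀ u ∈ Finset.range 9,
    dom (src (i + 1) ((i : ℤ) - (u : ℤ) + 1)) (src i ((i : ℤ) - (u : ℤ))) := by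
  decide +kernel

theorem src_cls : ∀ i ∈ Finset.range 7, ∀ u ∈ Finset.range 9,
    (src i ((i : ℤ) - (u : ℤ)) ∉ pos7 ∨ prm (src i ((i : ℤ) - (u : ℤ))).1) ∨
    (row (src i ((i : ℤ) - (u : ℤ))).1 = i ∧ col (src i ((i : ℤ) - (u : ℤ))) = (i : ℤ) - (u : ℤ)) := by
  decide +kernel

theorem src_dst : ∀ x ∈ pos7, ¬ prm x.1 → src (row x.1) (col x) = x ∧ row x.1 ≤ 5 + 1 ∧
    (row x.1 : ℤ) - (((9 : ℕ) : ℤ) - 1) ≤ col x ∧ col x ≤ (row x.1 : ℤ) := by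
  decide +kernel

/-- Left boundary. -/
def b0 {k : ℕ} (t : L7 k) (j : ℤ) : ℕ :=
  if j = -8 then 0 else if j ≤ -4 then t.1 ⟨(n5p, 12), by decide⟩
          else t.1 ⟨(n5p, 4), by decide⟩

/-- Right boundary. -/
def b1 {k : ℕ} (t : L7 k) (j : ℤ) : ℕ :=
  if j ≤ -1 then t.1 ⟨(n5p, 10), by decide⟩
          else if j ≤ 1 then t.1 ⟨(n5p, 6), by decide⟩ else k

theorem F_pos {k : ℕ} (c : L7 k) (x : N7 × ℕ) (h : x ∈ pos7) : F c x = c.1 ⟨x, h⟩ := dif_pos h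

theorem F_src0 {k : ℕ} (t : L7 k) (j : ℤ) : F t (src 0 j) = b0 t j := by
  unfold src b0
  rw [if_pos rfl]
  split_ifs
  · unfold F
    rw [dif_neg (by decide), if_pos rfl]
  · exact F_pos t _ _
  · exact F_pos t _ _

theorem F_src6 {k : ℕ} (t : L7 k) (j : ℤ) : F t (src 6 j) = b1 t j := by
  unfold src b1
  rw [if_neg (by decide), if_pos rfl]
  split_ifs
  · exact F_pos t _ _
  · exact F_pos t _ _
  · unfold F
    rw [dif_neg (by decide), if_neg (by decide)]

theorem F_prm {k : ℕ} {t : L7 k} (c : Ct8 k t) (x : N7 × ℕ) (h : x ∉ pos7 ∨ prm x.1) :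
    F c.1 x = F t x := by
  unfold F
  split_ifs with h1
  · rcases h with h | h
    · exact absurd h1 h
    · exact c.2 _ h
  · rfl
  · rfl

theorem src0_cls : ∀ j : ℤ, src 0 j ∉ pos7 ∨ prm (src 0 j).1 := by
  intro j
  unfold src
  rw [if_pos rfl]
  split_ifs
  · left; decide
  · right; decide
  · right; decide

theorem src6_cls : ∀ j : ℤ, src 6 j ∉ pos7 ∨ prm (src 6 j).1 := by
  intro j
  unfold src
  rw [if_neg (by decide), if_pos rfl]
  split_ifs
  · right; decide
  · right; decide
  · left; decide

theorem idx_u (p : ST.Idx 5 9) : p.1.1 ∈ Finset.range 7 ∧ ∃ u ∈ Finset.range 9,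
    p.1.2 = (p.1.1 : ℤ) - ((u : ℕ) : ℤ) := by
  obtain ⟨⟨i, j⟩, h1, h2, h3⟩ := p
  dsimp only at h1 h2 h3 ⊢
  refine ⟨Finset.mem_range.2 (by omega), ((i : ℤ) - j).toNat, Finset.mem_range.2 (by omega), ?_⟩
  omega

/-- The isomorphism. -/
def f {k : ℕ} (t : L7 k) (c : Ct8 k t) : ST.Elt 5 9 (b0 t) (b1 t) :=
  ⟨fun p => F c.1 (src p.1.1 p.1.2), by
    refine ⟨?_, ?_, ?_, ?_⟩
    · intro p hp
      change F c.1 (src p.1.1 p.1.2) = _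
      rw [hp, F_prm c _ (src0_cls _), F_src0]
    · intro p hp
      change F c.1 (src p.1.1 p.1.2) = _
      rw [hp, F_prm c _ (src6_cls _), F_src6]
    · intro p q h1 h2
      obtain ⟨hi, u, hu, hj⟩ := idx_u p
      have hq1 := q.2.1
      have hq2 := q.2.2.1
      rw [Finset.mem_range] at hu
      have h := src_dom1 p.1.1 (Finset.mem_range.2 (by omega)) u
        (Finset.mem_range.2 (by push_cast at hq2; omega))
      rw [← hj] at h
      change F c.1 (src q.1.1 q.1.2) ≤ F c.1 (src p.1.1 p.1.2)
      rw [h1, h2]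
      exact F_dom c.1 h
    · intro p q h1 h2
      obtain ⟨hi, u, hu, hj⟩ := idx_u p
      have hq1 := q.2.1
      have h := src_dom2 p.1.1 (Finset.mem_range.2 (by omega)) u hu
      rw [← hj] at h
      change F c.1 (src p.1.1 p.1.2) ≤ F c.1 (src q.1.1 q.1.2)
      rw [h1, h2]
      exact F_dom c.1 h⟩

/-- The array index of an unfixed position. -/
def dst (x : {x : N7 × ℕ // x ∈ pos7}) (h : ¬ prm x.1.1) : ST.Idx 5 9 :=
  ⟨(row x.1.1, col x.1), (src_dst x.1 x.2 h).2⟩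

theorem f_dst {k : ℕ} (t : L7 k) (c : Ct8 k t) (x : {x : N7 × ℕ // x ∈ pos7})
    (h : ¬ prm x.1.1) : (f t c).1 (dst x h) = c.1.1 x := by
  change F c.1 (src (row x.1.1) (col x.1)) = _
  rw [(src_dst x.1 x.2 h).1]
  exact F_pos _ _ _

theorem f_idx {k : ℕ} (t : L7 k) (p : ST.Idx 5 9) :
    (∀ c : Ct8 k t, (f t c).1 p = F t (src p.1.1 p.1.2)) ∨
    ∃ x h, p = dst x h := by
  obtain ⟨hi, u, hu, hj⟩ := idx_u p
  have h := src_cls _ hi u hu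
  rw [← hj] at h
  by_cases h0 : src p.1.1 p.1.2 ∉ pos7 ∨ prm (src p.1.1 p.1.2).1
  · left
    intro c
    exact F_prm c _ h0
  · right
    have h1 := h.resolve_left h0
    push Not at h0
    refine ⟨⟨_, h0.1⟩, not_or.2 h0.2, ?_⟩
    apply Subtype.ext
    exact Prod.ext h1.1.symm h1.2.symm

theorem dst_inj {x y : {x : N7 × ℕ // x ∈ pos7}} {hx : ¬ prm x.1.1} {hy : ¬ prm y.1.1}
    (h : dst x hx = dst y hy) : x = y := by
  have h1 : row x.1.1 = row y.1.1 := congrArg (fun p => p.1.1) h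
  have h2 : col x.1 = col y.1 := congrArg (fun p => p.1.2) h
  apply Subtype.ext
  rw [← (src_dst x.1 x.2 hx).1, h1, h2, (src_dst y.1 y.2 hy).1]

theorem f_le {k : ℕ} (t : L7 k) (c d : Ct8 k t) :
    CL.elLe c.1 d.1 ↔ ST.le (f t c) (f t d) := by
  constructor
  · intro h p
    rcases f_idx t p with hp | ⟨x, hx, rfl⟩
    · rw [hp, hp]
    · rw [f_dst, f_dst]; exact h x
  · intro h x
    by_cases hx : prm x.1.1
    · rw [c.2 x hx, d.2 x hx]
    · rw [← f_dst t c x hx, ← f_dst t d x hx]; exact h _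

theorem f_inj {k : ℕ} (t : L7 k) : Function.Injective (f t) := by
  intro c d h
  apply Subtype.ext
  apply Subtype.ext
  funext x
  apply le_antisymm
  · exact (f_le t c d).2 (fun p => by rw [h]) x
  · exact (f_le t d c).2 (fun p => by rw [h]) x

theorem row_inj : ∀ a b : N7, ¬ prm a → ¬ prm b → row a = row b → a = b := by
  decide

theorem f_edge {k : ℕ} (t : L7 k) (c d : Ct8 k t) (a : N7) (ha : ¬ prm a) :
    CL.edge a c.1 d.1 ↔ ST.edge (row a) (f t c) (f t d) := by
  constructor
  · rintro ⟨x, rfl, h1, h2⟩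
    refine ⟨dst x ha, rfl, ?_, ?_⟩
    · rw [f_dst, f_dst, h1]
    · intro q hq
      rcases f_idx t q with hp | ⟨y, hy, rfl⟩
      · rw [hp, hp]
      · rw [f_dst, f_dst]
        apply h2
        rintro rfl
        exact hq rfl
  · rintro ⟨p, hp, h1, h2⟩
    rcases f_idx t p with hp | ⟨x, hx, rfl⟩
    · rw [hp, hp] at h1; omega
    · rw [f_dst, f_dst] at h1
      refine ⟨x, row_inj _ _ hx ha hp, h1, ?_⟩
      intro y hy
      by_cases hy' : prm y.1.1
      · rw [c.2 y hy', d.2 y hy']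
      · rw [← f_dst t c y hy', ← f_dst t d y hy']
        apply h2
        intro h
        exact hy (dst_inj h)

/-! Surjectivity. -/

section surj

variable {k : ℕ} {t : L7 k} (g : ST.Elt 5 9 (b0 t) (b1 t))

theorem ent_eq {i : ℕ} {j : ℤ} (h : i ≤ 5 + 1 ∧ (i : ℤ) - (((9 : ℕ) : ℤ) - 1) ≤ j ∧ j ≤ (i : ℤ)) :
    ST.ent g i j = g.1 ⟨(i, j), h⟩ := dif_pos h

theorem ent_down (i : ℕ) (j : ℤ) (h : i ≤ 5) (h1 : (i : ℤ) - 7 ≤ j) (h2 : j ≤ i) :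
    ST.ent g (i + 1) j ≤ ST.ent g i j := by
  rw [ent_eq g (i := i) ⟨by omega, by push_cast; omega, h2⟩,
    ent_eq g (i := i + 1) ⟨by omega, by push_cast; omega, by push_cast; omega⟩]
  exact g.2.2.2.1 _ _ rfl rfl

theorem ent_up (i : ℕ) (j : ℤ) (h : i ≤ 5) (h1 : (i : ℤ) - 8 ≤ j) (h2 : j ≤ i) :
    ST.ent g i j ≤ ST.ent g (i + 1) (j + 1) := by
  rw [ent_eq g (i := i) ⟨by omega, by push_cast; omega, h2⟩,
    ent_eq g (i := i + 1) ⟨by omega, by push_cast; omega, by push_cast; omega⟩]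
  exact g.2.2.2.2 _ _ rfl rfl

theorem ent_0 (j : ℤ) (h1 : -8 ≤ j) (h2 : j ≤ 0) : ST.ent g 0 j = b0 t j := by
  rw [ent_eq g (i := 0) ⟨by omega, by push_cast; omega, by push_cast; omega⟩]
  exact g.2.1 _ rfl

theorem ent_6 (j : ℤ) (h1 : -2 ≤ j) (h2 : j ≤ 6) : ST.ent g 6 j = b1 t j := by
  rw [ent_eq g (i := 6) ⟨by omega, by push_cast; omega, by push_cast; omega⟩]
  exact g.2.2.1 _ rfl

theorem low0 (i : ℕ) : ∀ (j : ℤ), i ≤ 6 → (i : ℤ) - 8 ≤ j → j ≤ i →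
    b0 t (j - i) ≤ ST.ent g i j := by
  induction i with
  | zero =>
    intro j _ h1 h2
    rw [ent_0 g j (by push_cast at h1; omega) (by push_cast at h2; omega)]
    simp
  | succ i ih =>
    intro j h h1 h2
    push_cast at h1 h2
    have e1 := ih (j - 1) (by omega) (by omega) (by omega)
    have e2 := ent_up g i (j - 1) (by omega) (by omega) (by omega)
    rw [sub_add_cancel] at e2
    have e3 : j - ((i + 1 : ℕ) : ℤ) = j - 1 - i := by push_cast; ring
    rw [e3]
    exact e1.trans e2

theorem upp0 (i : ℕ) : ∀ (j : ℤ), i ≤ 6 → (i : ℤ) - 8 ≤ j → j ≤ 0 →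
    ST.ent g i j ≤ b0 t j := by
  induction i with
  | zero =>
    intro j _ h1 h2
    rw [ent_0 g j (by push_cast at h1; omega) h2]
  | succ i ih =>
    intro j h h1 h2
    push_cast at h1
    exact (ent_down g i j (by omega) (by omega) (by omega)).trans
      (ih j (by omega) (by omega) h2)

theorem upp1 (n : ℕ) : ∀ (i : ℕ) (j : ℤ), i + n = 6 → (i : ℤ) - 8 ≤ j → j ≤ i →
    ST.ent g i j ≤ b1 t (j + n) := by
  induction n with
  | zero =>
    intro i j h h1 h2
    obtain rfl : i = 6 := by omega
    rw [ent_6 g j (by push_cast at h1; omega) (by push_cast at h2; omega)]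
    simp
  | succ n ih =>
    intro i j h h1 h2
    have e1 := ih (i + 1) (j + 1) (by omega) (by push_cast; omega) (by push_cast; omega)
    have e2 := ent_up g i j (by omega) h1 h2
    have e3 : j + ((n + 1 : ℕ) : ℤ) = j + 1 + n := by push_cast; ring
    rw [e3]
    exact e2.trans e1

theorem low1 (n : ℕ) : ∀ (i : ℕ) (j : ℤ), i + n = 6 → -2 ≤ j → j ≤ i →
    b1 t j ≤ ST.ent g i j := by
  induction n with
  | zero =>
    intro i j h h1 h2
    obtain rfl : i = 6 := by omega
    rw [ent_6 g j (by omega) (by push_cast at h2; omega)]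
  | succ n ih =>
    intro i j h h1 h2
    exact (ih (i + 1) j (by omega) h1 (by push_cast; omega)).trans
      (ent_down g i j (by omega) (by omega) h2)

theorem b0_eq (j : ℤ) : b0 t j = if j = -8 then 0 else if j ≤ -4 then F t (n5p, 12)
    else F t (n5p, 4) := by
  rw [F_pos t (n5p, 12) (by decide), F_pos t (n5p, 4) (by decide)]; rfl

theorem b1_eq (j : ℤ) : b1 t j = if j ≤ -1 then F t (n5p, 10) else if j ≤ 1 then F t (n5p, 6)
    else k := by
  rw [F_pos t (n5p, 10) (by decide), F_pos t (n5p, 6) (by decide)]; rfl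

theorem b1_le (j : ℤ) : b1 t j ≤ k := by
  rw [b1_eq]
  split_ifs
  · exact F_le _ _
  · exact F_le _ _
  · exact le_rfl

/-- The labelling read off from an array. -/
def inv (x : N7 × ℕ) : ℕ := if prm x.1 then F t x else ST.ent g (row x.1) (col x)

theorem inv_le (x : N7 × ℕ) (hx : x ∈ pos7) : inv g x ≤ k := by
  unfold inv
  split_ifs with h
  · exact F_le _ _
  · obtain ⟨-, h1, h2, h3⟩ := src_dst x hx h
    push_cast at h2
    exact (upp1 g (6 - row x.1) _ _ (by omega) (by omega) h3).trans (b1_le _)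

theorem step_cls : ∀ x ∈ pos7, ∀ y ∈ pos7, adj7 x.1 y.1 → y.2 = x.2 + 1 →
    (prm x.1 ∧ prm y.1) ∨
    (¬ prm x.1 ∧ ¬ prm y.1 ∧ ((row y.1 = row x.1 + 1 ∧ col y = col x) ∨
      (row x.1 = row y.1 + 1 ∧ col x = col y + 1))) ∨
    (x, y) ∈ ([((n4, 3), (n5p, 4)), ((n5p, 4), (n4, 5)), ((n4, 5), (n5p, 6)),
      ((n5p, 6), (n4, 7)), ((n4, 9), (n5p, 10)), ((n5p, 10), (n4, 11)),
      ((n4, 11), (n5p, 12)), ((n5p, 12), (n4, 13))] : List ((N7 × ℕ) × (N7 × ℕ))) := by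
  decide +kernel

theorem inv_step (x y : N7 × ℕ) (h : CL.step adj7 pos7 x y) : inv g y ≤ inv g x := by
  obtain ⟨hx, hy, ha, hr⟩ := h
  rcases step_cls x hx y hy ha hr with ⟨h1, h2⟩ | ⟨h1, h2, h3⟩ | h
  · unfold inv
    rw [if_pos h1, if_pos h2, F_pos t x hx, F_pos t y hy]
    exact t.2.2.1 _ _ (Relation.ReflTransGen.single ⟨hx, hy, ha, hr⟩)
  · unfold inv
    rw [if_neg h1, if_neg h2]
    obtain ⟨-, a1, a2, a3⟩ := src_dst x hx h1
    obtain ⟨-, c1, c2, c3⟩ := src_dst y hy h2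
    push_cast at a2 c2
    rcases h3 with ⟨e1, e2⟩ | ⟨e1, e2⟩
    · rw [e1] at c1 c2 ⊢
      rw [e2] at c2 ⊢
      push_cast at c2
      exact ent_down g _ _ (by omega) (by omega) a3
    · rw [e1] at a1 ⊢
      rw [e2]
      exact ent_up g _ _ (by omega) (by omega) c3
  · have main : ∀ q : ℕ, inv g (n4, q) = ST.ent g 4 (((4 : ℤ) + 1 - (q : ℤ)) / 2) :=
      fun q => if_neg (by decide : ¬ prm n4)
    have bdry : ∀ q : ℕ, inv g (n5p, q) = F t (n5p, q) :=
      fun q => if_pos (by decide : prm n5p)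
    simp only [List.mem_cons, Prod.mk.injEq, List.not_mem_nil, or_false] at h
    have l0 := fun j => low0 g 4 j (by omega)
    have u0 := fun j => upp0 g 4 j (by omega)
    have l1 := fun j => low1 g 2 4 j (by omega)
    have u1 := fun j => upp1 g 2 4 j (by omega)
    simp only [b0_eq] at l0 u0
    simp only [b1_eq] at l1 u1
    rcases h with ⟨rfl, rfl⟩ | ⟨rfl, rfl⟩ | ⟨rfl, rfl⟩ | ⟨rfl, rfl⟩ | ⟨rfl, rfl⟩ | ⟨rfl, rfl⟩ |
      ⟨rfl, rfl⟩ | ⟨rfl, rfl⟩ <;> rw [main, bdry] <;> norm_num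
    · simpa using l0 1
    · simpa using u0 0
    · simpa using l1 0
    · simpa using u1 (-1)
    · simpa using l1 (-2)
    · simpa using u1 (-3)
    · simpa using l0 (-3)
    · simpa using u0 (-4)

theorem inv_ple (x y : N7 × ℕ) (h : CL.ple adj7 pos7 x y) : inv g y ≤ inv g x := by
  induction h with
  | refl => exact le_rfl
  | tail _ h ih => exact (inv_step g _ _ h).trans ih

/-- The preimage of an array. -/
def pre : Ct8 k t :=
  ⟨⟨fun x => inv g x.1, fun x => inv_le g x.1 x.2, fun x y h => inv_ple g _ _ h, trivial⟩, by
    intro x hx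
    change inv g x.1 = _
    unfold inv
    rw [if_pos hx, F_pos t x.1 x.2]⟩

theorem F_zero : F t (n1, 100) = 0 := by
  unfold F
  rw [dif_neg (by decide), if_pos rfl]

theorem F_top : F t (n1, 101) = k := by
  unfold F
  rw [dif_neg (by decide), if_neg (by decide)]

/-- Lower and upper bounds imposed by the boundary, as labels. -/
theorem src_bd : ∀ i ∈ Finset.range 7, ∀ u ∈ Finset.range 9,
    (src i ((i : ℤ) - (u : ℤ)) ∈ pos7 ∧ ¬ prm (src i ((i : ℤ) - (u : ℤ))).1) ∨
    ((src i ((i : ℤ) - (u : ℤ)) = src 0 (-(u : ℤ)) ∨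
      (-2 ≤ (i : ℤ) - (u : ℤ) ∧ src i ((i : ℤ) - (u : ℤ)) = src 6 ((i : ℤ) - (u : ℤ)))) ∧
     (src i ((i : ℤ) - (u : ℤ)) = src 6 (6 - (u : ℤ)) ∨
      ((i : ℤ) - (u : ℤ) ≤ 0 ∧ src i ((i : ℤ) - (u : ℤ)) = src 0 ((i : ℤ) - (u : ℤ))))) := by
  decide +kernel

theorem forced (p : ST.Idx 5 9) (h : src p.1.1 p.1.2 ∉ pos7 ∨ prm (src p.1.1 p.1.2).1) :
    g.1 p = F t (src p.1.1 p.1.2) := by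
  obtain ⟨hi, u, hu, hj⟩ := idx_u p
  have hb := src_bd _ hi u hu
  rw [← hj] at hb
  obtain ⟨hl, hr⟩ := hb.resolve_left (by
    rintro ⟨h1, h2⟩
    rcases h with h | h
    · exact h h1
    · exact h2 h)
  have he : g.1 p = ST.ent g p.1.1 p.1.2 := (ent_eq g p.2).symm
  obtain ⟨p1, p2, p3⟩ := p.2
  push_cast at p2
  rw [he]
  apply le_antisymm
  · rcases hr with hr | ⟨h0, hr⟩
    · rw [hr, F_src6]
      have := upp1 g (6 - p.1.1) p.1.1 p.1.2 (by omega) (by omega) p3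
      have e : p.1.2 + ((6 - p.1.1 : ℕ) : ℤ) = 6 - (u : ℤ) := by omega
      rwa [e] at this
    · rw [hr, F_src0]
      exact upp0 g _ _ p1 (by omega) h0
  · rcases hl with hl | ⟨h0, hl⟩
    · rw [hl, F_src0]
      have := low0 g p.1.1 p.1.2 p1 (by omega) p3
      have e : p.1.2 - (p.1.1 : ℤ) = -(u : ℤ) := by omega
      rwa [e] at this
    · rw [hl, F_src6]
      exact low1 g (6 - p.1.1) _ _ (by omega) h0 p3

theorem f_pre : f t (pre g) = g := by
  apply Subtype.ext
  funext p
  by_cases h0 : src p.1.1 p.1.2 ∉ pos7 ∨ prm (src p.1.1 p.1.2).1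
  · rw [forced g p h0]
    exact F_prm _ _ h0
  · rcases f_idx t p with hp | ⟨x, hx, rfl⟩
    · obtain ⟨hi, u, hu, hj⟩ := idx_u p
      have h := src_cls _ hi u hu
      rw [← hj] at h
      have h1 := h.resolve_left h0
      push Not at h0
      change F (pre g).1 (src p.1.1 p.1.2) = _
      rw [F_pos _ _ h0.1]
      change inv g (src p.1.1 p.1.2) = _
      unfold inv
      rw [if_neg (not_or.2 h0.2), h1.1, h1.2]
      exact ent_eq g p.2
    · rw [f_dst]
      change inv g x.1 = _
      unfold inv
      rw [if_neg hx]
      exact ent_eq g (dst x hx).2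

end surj

end Prf

/-- Lemma 4.1: the `J₅`-component of `t` in `L7(k)` is isomorphic, as a
poset with colored covering relations, to a skew-tabular lattice with `n = 5`, `m = 9`. -/
theorem statement_8 (k : ℕ) (t : L7 k) :
    ∃ f : Ct8 k t → ST.Elt 5 9
        (fun j => if j = -8 then 0 else if j ≤ -4 then t.1 ⟨(n5p, 12), by decide⟩
          else t.1 ⟨(n5p, 4), by decide⟩)
        (fun j => if j ≤ -1 then t.1 ⟨(n5p, 10), by decide⟩
          else if j ≤ 1 then t.1 ⟨(n5p, 6), by decide⟩ else k),
      Function.Bijective f ∧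
      (∀ c d : Ct8 k t, CL.elLe c.1 d.1 ↔ ST.le (f c) (f d)) ∧
      ∀ c d : Ct8 k t,
        (CL.edge n1 c.1 d.1 ↔ ST.edge 1 (f c) (f d)) ∧
        (CL.edge n2 c.1 d.1 ↔ ST.edge 2 (f c) (f d)) ∧
        (CL.edge n3 c.1 d.1 ↔ ST.edge 3 (f c) (f d)) ∧
        (CL.edge n4 c.1 d.1 ↔ ST.edge 4 (f c) (f d)) ∧
        (CL.edge n5 c.1 d.1 ↔ ST.edge 5 (f c) (f d)) := by
  refine ⟨Prf.f t, ⟨Prf.f_inj t, fun g => ⟨Prf.pre g, Prf.f_pre g⟩⟩, Prf.f_le t, ?_⟩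
  intro c d
  exact ⟨Prf.f_edge t c d n1 (by decide), Prf.f_edge t c d n2 (by decide),
    Prf.f_edge t c d n3 (by decide), Prf.f_edge t c d n4 (by decide),
    Prf.f_edge t c d n5 (by decide)⟩

end
end
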